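/- For any two Büchi automata A and B over a finite alphabet Σ there exists a Büchi automaton C over Σ such that (1) for every sequence σ : ℕ → Σ, C accepts σ if and only if A accepts σ and B accepts σ, and (2) every match of C is both a match of A and a match of B. -/

import Mathlib

/-!
The intersection automaton runs `A` and `B` in parallel together with a bit that says whose
acceptance is awaited; the bit flips exactly when that component accepts, and a product state
accepts when `A` accepts while being awaited. Infinitely many flips mean that both components
accept infinitely often. On a loop, an accepting state flips the bit from `A` to `B`, and closing
the loop has to flip it back: if the loop starts while `A` is awaited this happens after the
accepting state, otherwise before it, and the flip back is where `B` accepts.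
-/

namespace Buechi

/-- Nonempty finite strings over `α`, given as a head together with a tail. -/
abbrev NStr (α : Type*) : Type _ := α × List α

/-- The list of symbols of a nonempty string. -/
def NStr.toList {α : Type*} (s : NStr α) : List α := s.1 :: s.2

/-- Büchi automata over alphabet `α`: a finite type of states, a transition
relation, initial states and accepting states. -/
structure BA (α : Type*) where
  Q : Type
  fin : Fintype Q
  trans : Q → α → Q → Prop
  init : Q → Prop
  accept : Q → Prop

/-- Büchi acceptance: there is a run starting in an initial state, respecting the
transition relation, and visiting accepting states infinitely often. -/
def BA.Accepts {α : Type*} (M : BA α) (σ : ℕ → α) : Prop :=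
  ∃ ρ : ℕ → M.Q, M.init (ρ 0) ∧ (∀ n, M.trans (ρ n) (σ n) (ρ (n + 1))) ∧
    ∀ k, ∃ n, k ≤ n ∧ M.accept (ρ n)

/-- `M.StepsL p x q`: there is a path on the list `x` from `p` to `q` whose
consecutive transitions are labelled by the successive symbols of `x`. -/
def BA.StepsL {α : Type*} (M : BA α) : M.Q → List α → M.Q → Prop
  | p, [], q => p = q
  | p, a :: x, q => ∃ r, M.trans p a r ∧ M.StepsL r x q

/-- `M.StepsAccL p x q`: there is a path on `x` from `p` to `q` passing through an
accepting state before its last position. -/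
def BA.StepsAccL {α : Type*} (M : BA α) : M.Q → List α → M.Q → Prop
  | _, [], _ => False
  | p, a :: x, q => ∃ r, M.trans p a r ∧ ((M.accept p ∧ M.StepsL r x q) ∨ M.StepsAccL r x q)

/-- `p ⇒x q` for a nonempty string `x`. -/
def BA.Steps {α : Type*} (M : BA α) (p : M.Q) (x : NStr α) (q : M.Q) : Prop :=
  M.StepsL p x.toList q

/-- `p ⇒x! q` for a nonempty string `x`. -/
def BA.StepsAcc {α : Type*} (M : BA α) (p : M.Q) (x : NStr α) (q : M.Q) : Prop :=
  M.StepsAccL p x.toList q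

/-- `(x, y)` is a match of `M`: there are states `p`, `q` with `p` initial,
`p ⇒x q` and `q ⇒y! q`. -/
def BA.IsMatch {α : Type*} (M : BA α) (x y : NStr α) : Prop :=
  ∃ p q, M.init p ∧ M.Steps p x q ∧ M.StepsAcc q y q

/-- The ultimately periodic sequence `x·y^ω = x y y y ⋯`. -/
def upSeq {α : Type*} (x y : NStr α) (n : ℕ) : α :=
  if h : n < x.toList.length then x.toList.get ⟨n, h⟩
  else y.toList.get ⟨(n - x.toList.length) % y.toList.length,
    Nat.mod_lt _ (by simp [NStr.toList])⟩

section Alternation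

open Filter

/-- `b` is a record of whose turn it is when two events `P false` and `P true` are awaited in
alternation: `b n` is the event awaited at time `n`, and the turn passes exactly when that event
occurs. -/
def Alternates (P : Bool → ℕ → Prop) (b : ℕ → Bool) : Prop :=
  ∀ n, b (n + 1) = b n ↔ ¬ P (b n) n

variable {P : Bool → ℕ → Prop} {b : ℕ → Bool} {c : Bool} {m n : ℕ}

theorem exists_alternates (P : Bool → ℕ → Prop) (c : Bool) :
    ∃ b : ℕ → Bool, b 0 = c ∧ Alternates P b := by
  classical
  refine ⟨fun n => n.rec c fun n turn => if P turn n then !turn else turn, rfl, fun n => ?_⟩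
  dsimp only
  split_ifs with h <;> simp [h]

theorem Alternates.succ_eq_not (hb : Alternates P b) (hn : P (b n) n) : b (n + 1) = !b n :=
  Bool.eq_not.2 fun h => (hb n).1 h hn

theorem Alternates.exists_mem_Ico_of_ne (hb : Alternates P b) (hmn : m ≤ n) (hm : b m = c)
    (hn : b n ≠ c) : ∃ k ∈ Set.Ico m n, b k = c ∧ P c k := by
  induction n, hmn using Nat.le_induction with
  | base => exact absurd hm hn
  | succ n hmn ih =>
    by_cases hc : b n = c
    · have hP : P (b n) n := by_contra fun h => hn (((hb n).2 h).trans hc)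
      exact ⟨n, ⟨hmn, n.lt_succ_self⟩, hc, hc ▸ hP⟩
    · obtain ⟨k, ⟨hmk, hkn⟩, hk⟩ := ih hc
      exact ⟨k, ⟨hmk, hkn.trans n.lt_succ_self⟩, hk⟩

theorem Alternates.exists_ge_of_frequently (hb : Alternates P b) (hP : ∃ᶠ n in atTop, P c n)
    (hm : b m = c) : ∃ n ≥ m, b n = c ∧ P c n := by
  obtain ⟨n, hmn, hn⟩ := frequently_atTop.1 hP m
  by_cases hc : b n = c
  · exact ⟨n, hmn, hc, hn⟩
  · obtain ⟨k, ⟨hmk, -⟩, hk⟩ := hb.exists_mem_Ico_of_ne hmn hm hc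
    exact ⟨k, hmk, hk⟩

theorem Alternates.frequently_of_frequently_turn (hb : Alternates P b)
    (hc : ∃ᶠ n in atTop, b n = c ∧ P c n) (d : Bool) : ∃ᶠ n in atTop, P d n := by
  obtain rfl | rfl := Bool.eq_or_eq_not d c
  · exact hc.mono fun _ => And.right
  · refine frequently_atTop.2 fun k => ?_
    obtain ⟨m, hkm, rfl, hm⟩ := frequently_atTop.1 hc k
    obtain ⟨n, hmn, hn, -⟩ := frequently_atTop.1 hc (m + 1)
    obtain ⟨l, ⟨hml, -⟩, -, hl⟩ :=
      hb.exists_mem_Ico_of_ne hmn (hb.succ_eq_not hm) (by simp [hn])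
    exact ⟨l, by omega, hl⟩

theorem Alternates.frequently_turn_iff (hb : Alternates P b) :
    (∃ᶠ n in atTop, b n = c ∧ P c n) ↔ ∀ d, ∃ᶠ n in atTop, P d n := by
  refine ⟨hb.frequently_of_frequently_turn, fun hP => frequently_atTop.2 fun k => ?_⟩
  by_cases hk : b k = c
  · exact hb.exists_ge_of_frequently (hP c) hk
  · obtain ⟨m, hkm, hm, hPm⟩ := hb.exists_ge_of_frequently (hP (b k)) rfl
    have hc : b (m + 1) = c := by
      rw [hb.succ_eq_not (hm ▸ hPm), hm, Bool.not_eq_eq_eq_not, Bool.eq_not]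
      exact hk
    obtain ⟨n, hmn, hn⟩ := hb.exists_ge_of_frequently (hP c) hc
    exact ⟨n, by omega, hn⟩

end Alternation

namespace BA

section Paths

variable {α : Type*} {M N : BA α} {p q r : M.Q} {x y : List α}

theorem StepsL.append (h : M.StepsL p x q) (h' : M.StepsL q y r) : M.StepsL p (x ++ y) r := by
  induction x generalizing p with
  | nil => exact h ▸ h'
  | cons a x ih =>
    obtain ⟨s, hs, hx⟩ := h
    exact ⟨s, hs, ih hx⟩

theorem StepsAccL.append_stepsL (h : M.StepsAccL p x q) (h' : M.StepsL q y r) :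
    M.StepsAccL p (x ++ y) r := by
  induction x generalizing p with
  | nil => exact h.elim
  | cons a x ih =>
    obtain ⟨s, hs, ⟨hp, hx⟩ | hx⟩ := h
    · exact ⟨s, hs, .inl ⟨hp, hx.append h'⟩⟩
    · exact ⟨s, hs, .inr (ih hx)⟩

theorem StepsL.append_stepsAccL (h : M.StepsL p x q) (h' : M.StepsAccL q y r) :
    M.StepsAccL p (x ++ y) r := by
  induction x generalizing p with
  | nil => exact h ▸ h'
  | cons a x ih =>
    obtain ⟨s, hs, hx⟩ := h
    exact ⟨s, hs, .inr (ih hx)⟩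

theorem StepsAccL.exists_split (h : M.StepsAccL p x q) :
    ∃ u a v r s, x = u ++ a :: v ∧
      M.StepsL p u r ∧ M.accept r ∧ M.trans r a s ∧ M.StepsL s v q := by
  induction x generalizing p with
  | nil => exact h.elim
  | cons a x ih =>
    obtain ⟨s, hs, ⟨hp, hx⟩ | hx⟩ := h
    · exact ⟨[], a, x, p, s, rfl, rfl, hp, hs, hx⟩
    · obtain ⟨u, b, v, r, t, rfl, hu, hr⟩ := ih hx
      exact ⟨a :: u, b, v, r, t, rfl, ⟨s, hs, hu⟩, hr⟩

theorem StepsL.map (f : M.Q → N.Q) (htrans : ∀ p a q, M.trans p a q → N.trans (f p) a (f q))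
    (h : M.StepsL p x q) : N.StepsL (f p) x (f q) := by
  induction x generalizing p with
  | nil => exact congrArg f h
  | cons a x ih =>
    obtain ⟨r, hr, hx⟩ := h
    exact ⟨f r, htrans p a r hr, ih hx⟩

theorem StepsAccL.map (f : M.Q → N.Q)
    (htrans : ∀ p a q, M.trans p a q → N.trans (f p) a (f q))
    (haccept : ∀ p, M.accept p → N.accept (f p)) (h : M.StepsAccL p x q) :
    N.StepsAccL (f p) x (f q) := by
  obtain ⟨u, a, v, r, s, rfl, hu, hr, hrs, hv⟩ := h.exists_split
  exact (hu.map f htrans).append_stepsAccL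
    ⟨f s, htrans r a s hrs, .inl ⟨haccept r hr, hv.map f htrans⟩⟩

end Paths

section Intersection

open Filter

variable {α : Type*} {A B : BA α}

/-- States of the intersection automaton: a state of each component, together with the bit telling
whose acceptance is awaited, `false` for `A` and `true` for `B`. -/
structure InterState (A B : BA α) where
  left : A.Q
  right : B.Q
  turn : Bool

instance (A B : BA α) : Finite (InterState A B) := by
  have := A.fin
  have := B.fin
  refine Finite.of_injective (fun s : InterState A B => (s.left, s.right, s.turn)) ?_
  rintro ⟨⟩ ⟨⟩ h
  simpa using h

/-- Acceptance of the component named by the bit, with the encoding of `InterState.turn`. -/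
def ComponentAccept (A B : BA α) (p : A.Q) (q : B.Q) : Bool → Prop
  | false => A.accept p
  | true => B.accept q

/-- The intersection automaton: both components move simultaneously, and the turn passes exactly
when the awaited component accepts. Since the two components alternate, it is enough to count the
acceptances of `A` in its own turn. -/
noncomputable def inter (A B : BA α) : BA α where
  Q := InterState A B
  fin := Fintype.ofFinite _
  trans s a t := A.trans s.left a t.left ∧ B.trans s.right a t.right ∧
    (t.turn = s.turn ↔ ¬ ComponentAccept A B s.left s.right s.turn)
  init s := A.init s.left ∧ B.init s.right ∧ s.turn = false
  accept s := s.turn = false ∧ A.accept s.left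

theorem inter_accepts_iff (σ : ℕ → α) : (A.inter B).Accepts σ ↔ A.Accepts σ ∧ B.Accepts σ := by
  constructor
  · rintro ⟨ρ, hinit, htrans, hacc⟩
    have halt : Alternates (fun c n => ComponentAccept A B (ρ n).left (ρ n).right c)
        (fun n => (ρ n).turn) := fun n => (htrans n).2.2
    have hfreq := halt.frequently_turn_iff.1 (frequently_atTop.2 hacc)
    exact ⟨⟨fun n => (ρ n).left, hinit.1, fun n => (htrans n).1,
        frequently_atTop.1 (hfreq false)⟩,
      ⟨fun n => (ρ n).right, hinit.2.1, fun n => (htrans n).2.1,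
        frequently_atTop.1 (hfreq true)⟩⟩
  · rintro ⟨⟨f, hf, hftrans, hfacc⟩, g, hg, hgtrans, hgacc⟩
    obtain ⟨b, hb, halt⟩ := exists_alternates (fun c n => ComponentAccept A B (f n) (g n) c) false
    have hfreq : ∃ᶠ n in atTop, b n = false ∧ A.accept (f n) :=
      halt.frequently_turn_iff.2 (Bool.forall_bool.2
        ⟨frequently_atTop.2 hfacc, frequently_atTop.2 hgacc⟩)
    exact ⟨fun n => ⟨f n, g n, b n⟩, ⟨hf, hg, hb⟩,
      fun n => ⟨hftrans n, hgtrans n, halt n⟩, frequently_atTop.1 hfreq⟩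

variable {x : List α} {s t : InterState A B}

theorem StepsL.left_of_inter (h : (A.inter B).StepsL s x t) : A.StepsL s.left x t.left :=
  h.map (M := A.inter B) InterState.left fun _ _ _ hst => hst.1

theorem StepsL.right_of_inter (h : (A.inter B).StepsL s x t) : B.StepsL s.right x t.right :=
  h.map (M := A.inter B) InterState.right fun _ _ _ hst => hst.2.1

theorem StepsAccL.left_of_inter (h : (A.inter B).StepsAccL s x t) :
    A.StepsAccL s.left x t.left :=
  h.map (M := A.inter B) InterState.left (fun _ _ _ hst => hst.1) fun _ hs => hs.2

theorem StepsL.stepsAccL_right_of_inter (h : (A.inter B).StepsL s x t) (hs : s.turn = true)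
    (ht : t.turn = false) : B.StepsAccL s.right x t.right := by
  induction x generalizing s with
  | nil =>
    obtain rfl : s = t := h
    simp [hs] at ht
  | cons a x ih =>
    obtain ⟨r, ⟨-, hr, hturn⟩, hx⟩ := h
    refine ⟨r.right, hr, ?_⟩
    rw [hs] at hturn
    by_cases hacc : B.accept s.right
    · exact .inl ⟨hacc, hx.right_of_inter⟩
    · exact .inr (ih hx (hturn.2 hacc))

theorem StepsAccL.right_of_inter_loop (h : (A.inter B).StepsAccL s x s) :
    B.StepsAccL s.right x s.right := by
  obtain ⟨u, a, v, r, t, rfl, hu, ⟨hr, hacc⟩, hrt, hv⟩ := h.exists_split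
  cases hs : s.turn with
  | true =>
    have hav : B.StepsL r.right (a :: v) s.right := ⟨t.right, hrt.2.1, hv.right_of_inter⟩
    exact (hu.stepsAccL_right_of_inter hs hr).append_stepsL hav
  | false =>
    have ht : t.turn = true := by
      have hturn := hrt.2.2
      rw [hr] at hturn
      exact Bool.eq_true_of_not_eq_false fun h => hturn.1 h hacc
    exact hu.right_of_inter.append_stepsAccL
      ⟨t.right, hrt.2.1, .inr (hv.stepsAccL_right_of_inter ht hs)⟩

variable {x y : NStr α}

theorem IsMatch.left_of_inter (h : (A.inter B).IsMatch x y) : A.IsMatch x y := by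
  obtain ⟨p, q, hp, hx, hy⟩ := h
  exact ⟨p.left, q.left, hp.1, hx.left_of_inter, hy.left_of_inter⟩

theorem IsMatch.right_of_inter (h : (A.inter B).IsMatch x y) : B.IsMatch x y := by
  obtain ⟨p, q, hp, hx, hy⟩ := h
  exact ⟨p.right, q.right, hp.2.1, hx.right_of_inter, hy.right_of_inter_loop⟩

end Intersection

end BA

theorem intersection_automaton_exists_general {α : Type*} (A B : BA α) :
    ∃ C : BA α,
      (∀ σ : ℕ → α, C.Accepts σ ↔ A.Accepts σ ∧ B.Accepts σ) ∧
      (∀ x y : NStr α, C.IsMatch x y → A.IsMatch x y ∧ B.IsMatch x y) :=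
  ⟨A.inter B, BA.inter_accepts_iff, fun _ _ h => ⟨h.left_of_inter, h.right_of_inter⟩⟩

/-- Closure of Büchi automata under intersection, with the additional property
that every match of the intersection automaton is a match of both automata. -/
theorem intersection_automaton_exists {α : Type*} [Fintype α] (A B : BA α) :
    ∃ C : BA α,
      (∀ σ : ℕ → α, C.Accepts σ ↔ A.Accepts σ ∧ B.Accepts σ) ∧
      (∀ x y : NStr α, C.IsMatch x y → A.IsMatch x y ∧ B.IsMatch x y) :=
  intersection_automaton_exists_general A B

end Buechi
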